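/- arXiv:1909.11473 — 6 statements merged into one kernel-verified Lean document; each statement's English description precedes it below -/
import Mathlib

section
/- Let g : ℝ⁷ → ℝ⁷ be a bijective linear map such that φ₀(g v₁, g v₂, g v₃) = φ₀(v₁, v₂, v₃) for all v₁, v₂, v₃ ∈ ℝ⁷. Then g preserves the standard Euclidean inner product, i.e. ⟪g v, g w⟫ = ⟪v, w⟫ for all v, w ∈ ℝ⁷, and g preserves orientation, i.e. det g = 1. -/
/-- The alternating 3-form `dx^{ijk}` on `ℝ⁷` (with indices `0`-based), given by
`(v₁,v₂,v₃) ↦ det` of the `3×3` matrix whose `a`-th row is `((vₐ)ᵢ, (vₐ)ⱼ, (vₐ)ₖ)`. -/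
noncomputable def dx (i j k : Fin 7) : AlternatingMap ℝ (Fin 7 → ℝ) ℝ (Fin 3) :=
  (Matrix.detRowAlternating : AlternatingMap ℝ (Fin 3 → ℝ) ℝ (Fin 3)).compLinearMap
    (LinearMap.funLeft ℝ ℝ ![i, j, k])

/-- The standard `G₂` 3-form
`φ₀ = dx^{123} + dx^{145} + dx^{167} + dx^{246} − dx^{257} − dx^{347} − dx^{356}` on `ℝ⁷`
(written with `0`-based indices). -/
noncomputable def phi0 : AlternatingMap ℝ (Fin 7 → ℝ) ℝ (Fin 3) :=
  dx 0 1 2 + dx 0 3 4 + dx 0 5 6 + dx 1 3 5 - dx 1 4 6 - dx 2 3 6 - dx 2 4 5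

/-!
Bryant's identity: for the form `φ₀` on `ℝ⁷` and the contraction `ι` one has
`ι_u φ₀ ∧ ι_v φ₀ ∧ φ₀ = 6 ⟨u, v⟩ vol`, so the inner product is determined by `φ₀` up to the choice
of a volume form. Pulling the identity back by a map `g` that fixes `φ₀` gives
`det g · ⟨g u, g v⟩ = ⟨u, v⟩`. Taking determinants of Gram matrices, `(det g) ^ (7 + 2) = 1`, and
because the exponent is odd `det g = 1`; hence `g` is an isometry.
-/

open AlternatingMap Matrix

section WedgeProduct

variable {R M : Type*} [CommRing R] [AddCommGroup M] [Module R M] {k n : ℕ}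

/-- The wedge product `k! • (α ∧ β)` of alternating forms `α` of degree `k` and `β` of degree `n`,
as a linear function of `α`. The factor `k!` comes from summing over all orderings of the `k`
vectors fed to `α` rather than over shuffles, which keeps the recursion on `k` free of division. -/
noncomputable def wedgeRight (β : M [⋀^Fin n]→ₗ[R] R) :
    {k : ℕ} → M [⋀^Fin k]→ₗ[R] R →ₗ[R] M [⋀^Fin (n + k)]→ₗ[R] R
  | 0 => LinearMap.toSpanSingleton R _ β ∘ₗ constLinearEquivOfIsEmpty.symm.toLinearMap
  | _ + 1 => alternatizeUncurryFinLM ∘ₗ (wedgeRight β).compRight R ∘ₗ curryLeftLinearMap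

lemma wedgeRight_zero (β : M [⋀^Fin n]→ₗ[R] R) (α : M [⋀^Fin 0]→ₗ[R] R) :
    wedgeRight β α = α ![] • β := by
  ext v
  simp [wedgeRight]

lemma wedgeRight_succ (β : M [⋀^Fin n]→ₗ[R] R) (α : M [⋀^Fin (k + 1)]→ₗ[R] R) :
    wedgeRight β α = alternatizeUncurryFin (wedgeRight β ∘ₗ α.curryLeft) := rfl

lemma wedgeRight_succ_apply (β : M [⋀^Fin n]→ₗ[R] R) (α : M [⋀^Fin (k + 1)]→ₗ[R] R)
    (v : Fin (n + k + 1) → M) :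
    wedgeRight β α v =
      ∑ i : Fin (n + k + 1),
        (-1) ^ (i : ℕ) * wedgeRight β (α.curryLeft (v i)) (i.removeNth v) := by
  simp [wedgeRight_succ, alternatizeUncurryFin_apply]

lemma wedgeRight_compLinearMap (β : M [⋀^Fin n]→ₗ[R] R) (α : M [⋀^Fin k]→ₗ[R] R)
    (g : M →ₗ[R] M) :
    wedgeRight (β.compLinearMap g) (α.compLinearMap g) = (wedgeRight β α).compLinearMap g := by
  induction k with
  | zero => ext v; simp [wedgeRight_zero, Subsingleton.elim _ ![]]
  | succ k ih =>
    ext v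
    simp only [wedgeRight_succ_apply, compLinearMap_apply, curryLeft_compLinearMap, ih]
    rfl

lemma alternatizeUncurryFin_sub (f g : M →ₗ[R] M [⋀^Fin n]→ₗ[R] R) :
    alternatizeUncurryFin (f - g) = alternatizeUncurryFin f - alternatizeUncurryFin g :=
  map_sub alternatizeUncurryFinLM f g

lemma removeNth_succ_vecCons {A : Type*} (i : Fin (n + 1)) (x : A) (v : Fin (n + 1) → A) :
    i.succ.removeNth (vecCons x v) = vecCons x (i.removeNth v) :=
  Fin.cons_comp_succ_succAbove x v i

/-- The wedge product `θ ∧ β` of a covector `θ` and an alternating form `β`, as a linear function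
of `β`. -/
noncomputable def covectorWedge (θ : M →ₗ[R] R) :
    M [⋀^Fin n]→ₗ[R] R →ₗ[R] M [⋀^Fin (n + 1)]→ₗ[R] R :=
  alternatizeUncurryFinLM ∘ₗ LinearMap.smulRightₗ θ

lemma covectorWedge_apply (θ : M →ₗ[R] R) (β : M [⋀^Fin n]→ₗ[R] R) (v : Fin (n + 1) → M) :
    covectorWedge θ β v =
      ∑ i : Fin (n + 1), (-1) ^ (i : ℕ) * (θ (v i) * β (i.removeNth v)) := by
  simp [covectorWedge, alternatizeUncurryFin_apply]

lemma covectorWedge_proj_apply_single {ι : Type*} [DecidableEq ι] {f : Fin (n + 1) → ι}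
    (hf : f.Injective) (p : Fin (n + 1)) (β : (ι → R) [⋀^Fin n]→ₗ[R] R) :
    covectorWedge (LinearMap.proj (f p)) β (fun a => Pi.single (f a) 1) =
      (-1) ^ (p : ℕ) * β fun a => Pi.single (f (p.succAbove a)) 1 := by
  rw [covectorWedge_apply, Fintype.sum_eq_single p]
  · simp only [LinearMap.proj_apply, Pi.single_eq_same, one_mul]
    rfl
  · intro a ha
    simp [Pi.single_eq_of_ne (hf.ne ha.symm)]

lemma covectorWedge_three_apply_single (i : Fin (n + 3)) (j : Fin (n + 2)) (k : Fin (n + 1))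
    (β : (Fin (n + 3) → R) [⋀^Fin n]→ₗ[R] R) :
    covectorWedge (LinearMap.proj i) (covectorWedge (LinearMap.proj (i.succAbove j))
      (covectorWedge (LinearMap.proj (i.succAbove (j.succAbove k))) β))
        (fun a => Pi.single a 1) =
      (-1) ^ (i + j + k : ℕ) *
        β fun a => Pi.single (i.succAbove (j.succAbove (k.succAbove a))) 1 := by
  have hij := i.succAbove_right_injective.comp j.succAbove_right_injective
  refine (covectorWedge_proj_apply_single Function.injective_id i _).trans ?_
  simp only [id_eq]
  rw [covectorWedge_proj_apply_single (f := i.succAbove) i.succAbove_right_injective,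
    covectorWedge_proj_apply_single (f := fun a => i.succAbove (j.succAbove a)) hij]
  ring

lemma curryLeft_covectorWedge_zero (θ : M →ₗ[R] R) (α : M [⋀^Fin 0]→ₗ[R] R) :
    (covectorWedge θ α).curryLeft = LinearMap.smulRightₗ θ α := by
  ext w v
  simp [covectorWedge_apply, Fin.removeNth_zero]

lemma curryLeft_covectorWedge (θ : M →ₗ[R] R) (α : M [⋀^Fin (k + 1)]→ₗ[R] R) :
    (covectorWedge θ α).curryLeft =
      LinearMap.smulRightₗ θ α - covectorWedge θ ∘ₗ α.curryLeft := by
  ext w v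
  rw [curryLeft_apply_apply, covectorWedge_apply, Fin.sum_univ_succ]
  simp [removeNth_succ_vecCons, covectorWedge_apply, pow_succ, sub_eq_add_neg, Fin.removeNth_zero]

lemma alternatizeUncurryFin_covectorWedge_comp (θ : M →ₗ[R] R)
    (γ : M →ₗ[R] M [⋀^Fin n]→ₗ[R] R) :
    alternatizeUncurryFin (covectorWedge θ ∘ₗ γ) =
      -covectorWedge θ (alternatizeUncurryFin γ) := by
  let f : M →ₗ[R] M →ₗ[R] M [⋀^Fin n]→ₗ[R] R :=
    LinearMap.smulRightₗ θ ∘ₗ γ + (LinearMap.smulRightₗ θ ∘ₗ γ).flip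
  have hf : alternatizeUncurryFinLM ∘ₗ f =
      covectorWedge θ ∘ₗ γ + LinearMap.smulRightₗ θ (alternatizeUncurryFin γ) := by
    ext x v
    simp [f, covectorWedge, alternatizeUncurryFin_apply, Finset.mul_sum, mul_left_comm]
  refine eq_neg_of_add_eq_zero_left ?_
  calc alternatizeUncurryFin (covectorWedge θ ∘ₗ γ) + covectorWedge θ (alternatizeUncurryFin γ)
      = alternatizeUncurryFin (alternatizeUncurryFinLM ∘ₗ f) := by
        rw [hf, alternatizeUncurryFin_add]; rfl
    _ = 0 := alternatizeUncurryFin_alternatizeUncurryFinLM_comp_of_symmetric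
        fun x y => add_comm _ _

lemma wedgeRight_covectorWedge (θ : M →ₗ[R] R) (α : M [⋀^Fin k]→ₗ[R] R)
    (β : M [⋀^Fin n]→ₗ[R] R) :
    wedgeRight β (covectorWedge θ α) = (k + 1) • covectorWedge θ (wedgeRight β α) := by
  have hsmul {k : ℕ} (α : M [⋀^Fin k]→ₗ[R] R) :
      wedgeRight β ∘ₗ LinearMap.smulRightₗ θ α = LinearMap.smulRightₗ θ (wedgeRight β α) :=
    LinearMap.ext fun w => map_smul (wedgeRight β) (θ w) α
  induction k with
  | zero =>
    rw [wedgeRight_succ, curryLeft_covectorWedge_zero, hsmul]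
    exact (one_smul ℕ _).symm
  | succ k ih =>
    have hcomp : wedgeRight β ∘ₗ covectorWedge θ ∘ₗ α.curryLeft =
        (k + 1) • (covectorWedge θ ∘ₗ wedgeRight β ∘ₗ α.curryLeft) :=
      LinearMap.ext fun w => ih (α.curryLeft w)
    calc wedgeRight β (covectorWedge θ α)
        = alternatizeUncurryFin (LinearMap.smulRightₗ θ (wedgeRight β α) -
            (k + 1) • (covectorWedge θ ∘ₗ wedgeRight β ∘ₗ α.curryLeft)) := by
          rw [wedgeRight_succ, curryLeft_covectorWedge, LinearMap.comp_sub, hsmul, hcomp]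
      _ = covectorWedge θ (wedgeRight β α) + (k + 1) • covectorWedge θ (wedgeRight β α) := by
          refine (alternatizeUncurryFin_sub _ _).trans ?_
          rw [alternatizeUncurryFin_smul, alternatizeUncurryFin_covectorWedge_comp, smul_neg,
            sub_neg_eq_add]
          rfl
      _ = (k + 1 + 1) • covectorWedge θ (wedgeRight β α) := (succ_nsmul' _ _).symm

lemma wedgeRight_two_two_apply (α β : M [⋀^Fin 2]→ₗ[R] R) (a b c d : M) :
    wedgeRight β α ![a, b, c, d] =
      2 * (α ![a, b] * β ![c, d] - α ![a, c] * β ![b, d] + α ![a, d] * β ![b, c]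
        + α ![b, c] * β ![a, d] - α ![b, d] * β ![a, c] + α ![c, d] * β ![a, b]) := by
  have hswap (x y : M) : α ![y, x] = -α ![x, y] := by
    simpa using α.map_swap ![x, y] Fin.zero_ne_one
  simp only [wedgeRight_succ_apply (n := 2) (k := 1), wedgeRight_succ_apply (n := 2) (k := 0),
    wedgeRight_zero, curryLeft_apply_apply, AlternatingMap.smul_apply, smul_eq_mul,
    Fin.sum_univ_succ, Finset.univ_eq_empty, Finset.sum_empty, Fin.val_zero, Fin.val_succ,
    Fin.removeNth_zero, removeNth_succ_vecCons, cons_val_succ, cons_val_zero, Fin.tail_def]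
  rw [hswap a b, hswap a c, hswap a d, hswap b c, hswap b d, hswap c d]
  ring

lemma detRowAlternating_compLinearMap_pi (θ : Fin (n + 1) → M →ₗ[R] R) :
    detRowAlternating.compLinearMap (LinearMap.pi θ) =
      covectorWedge (θ 0) (detRowAlternating.compLinearMap (LinearMap.pi fun i => θ i.succ)) := by
  ext v
  simp only [compLinearMap_apply, covectorWedge_apply, ← mul_assoc]
  exact det_succ_column_zero _

lemma wedgeRight_detRowAlternating_three (θ : Fin 3 → M →ₗ[R] R) (β : M [⋀^Fin n]→ₗ[R] R) :
    wedgeRight β (detRowAlternating.compLinearMap (LinearMap.pi θ)) =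
      6 • covectorWedge (θ 0) (covectorWedge (θ 1) (covectorWedge (θ 2) β)) := by
  have hzero (θ : Fin 0 → M →ₗ[R] R) :
      wedgeRight β (detRowAlternating.compLinearMap (LinearMap.pi θ)) = β := by
    rw [wedgeRight_zero]
    exact (congrArg (· • β) (det_isEmpty (n := Fin 0))).trans (one_smul R β)
  simp only [detRowAlternating_compLinearMap_pi, wedgeRight_covectorWedge, hzero, map_nsmul,
    smul_smul]
  rfl

/-- Bryant's 7-form `ι_u φ ∧ ι_v φ ∧ φ` of a 3-form `φ`, symmetric bilinear in `u` and `v`, up to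
the factor `2! * 3!` that `wedgeRight` introduces. -/
noncomputable def bryantForm (φ : M [⋀^Fin 3]→ₗ[R] R) (u v : M) : M [⋀^Fin 7]→ₗ[R] R :=
  wedgeRight (n := 4) (wedgeRight (φ.curryLeft v) (φ.curryLeft u)) φ

lemma bryantForm_compLinearMap (φ : M [⋀^Fin 3]→ₗ[R] R) (g : M →ₗ[R] M) (u v : M) :
    bryantForm (φ.compLinearMap g) u v = (bryantForm φ (g u) (g v)).compLinearMap g := by
  simp only [bryantForm, curryLeft_compLinearMap]
  rw [← wedgeRight_compLinearMap, ← wedgeRight_compLinearMap]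

end WedgeProduct

section Determinant

variable {R M N ι : Type*} [CommRing R] [AddCommGroup M] [Module R M]

lemma alternatingMap_ext_three [AddCommGroup N] [Module R N] {α β : M [⋀^Fin 3]→ₗ[R] N}
    (h : ∀ u v w, α ![u, v, w] = β ![u, v, w]) : α = β := by
  ext v
  rw [← FinVec.etaExpand_eq v]
  exact h _ _ _

lemma compLinearMap_eq_det_smul [Finite ι] (e : Module.Basis ι R M) (f : M [⋀^ι]→ₗ[R] R)
    (g : M →ₗ[R] M) : f.compLinearMap g = LinearMap.det g • f := by
  classical
  have := Fintype.ofFinite ι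
  rw [f.eq_smul_basis_det e]
  ext v
  exact (congrArg (f e * ·) (e.det_comp g v)).trans (mul_left_comm _ _ _)

end Determinant

lemma det_eq_one_of_det_mul_dotProduct {R ι : Type*} [CommRing R] [LinearOrder R]
    [IsStrictOrderedRing R] [Fintype ι] (hι : Odd (Fintype.card ι)) {g : (ι → R) →ₗ[R] ι → R}
    (h : ∀ v w, LinearMap.det g * (g v ⬝ᵥ g w) = v ⬝ᵥ w) :
    LinearMap.det g = 1 := by
  classical
  set G := LinearMap.toMatrix' g
  have hdet : G.det = LinearMap.det g := LinearMap.det_toMatrix' g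
  have hG : G.det • (Gᵀ * G) = 1 := by
    ext i j
    rw [hdet]
    simpa [G, Matrix.mul_apply, LinearMap.toMatrix'_apply, dotProduct, Matrix.one_apply,
      Pi.single_apply, eq_comm] using h (Pi.single i 1) (Pi.single j 1)
  have hpow : G.det ^ (Fintype.card ι + 2) = 1 := by
    simpa [det_smul, pow_add, sq] using congrArg Matrix.det hG
  rw [← hdet]
  exact (hι.add_even even_two).strictMono_pow.injective (hpow.trans (one_pow _).symm)

section PhiZero

/-- The standard basis `e₀, …, e₆` of `ℝ⁷`. -/
abbrev basisVec (a : Fin 7) : Fin 7 → ℝ := Pi.single a 1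

lemma dx_apply (i j k : Fin 7) (u v w : Fin 7 → ℝ) :
    dx i j k ![u, v, w] =
      u i * v j * w k - u i * v k * w j - u j * v i * w k + u j * v k * w i +
        u k * v i * w j - u k * v j * w i := by
  change Matrix.det (Matrix.of fun a => LinearMap.funLeft ℝ ℝ ![i, j, k] (![u, v, w] a)) = _
  rw [Matrix.det_fin_three]
  simp [LinearMap.funLeft]

lemma wedgeRight_dx {n : ℕ} (i j k : Fin 7) (β : (Fin 7 → ℝ) [⋀^Fin n]→ₗ[ℝ] ℝ) :
    wedgeRight β (dx i j k) =
      6 • covectorWedge (LinearMap.proj i)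
        (covectorWedge (LinearMap.proj j) (covectorWedge (LinearMap.proj k) β)) := by
  have hdx : dx i j k = detRowAlternating.compLinearMap
      (LinearMap.pi fun a => LinearMap.proj (![i, j, k] a)) := rfl
  rw [hdx, wedgeRight_detRowAlternating_three]
  rfl

lemma wedgeRight_dx_apply_basisVec (β : (Fin 7 → ℝ) [⋀^Fin 4]→ₗ[ℝ] ℝ) (i j k : Fin 7)
    (p : Fin 6) (q : Fin 5) (c : Fin 4 → Fin 7) (hj : i.succAbove p = j)
    (hk : i.succAbove (p.succAbove q) = k)
    (hc : ∀ a, i.succAbove (p.succAbove (q.succAbove a)) = c a) :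
    wedgeRight β (dx i j k) basisVec = 6 * ((-1) ^ (i + p + q : ℕ) * β (basisVec ∘ c)) := by
  have h := covectorWedge_three_apply_single (n := 4) i p q β
  simp only [hc] at h
  subst hj hk
  rw [wedgeRight_dx, AlternatingMap.smul_apply, nsmul_eq_mul, Nat.cast_ofNat]
  exact congrArg (6 * ·) h

lemma wedgeRight_phi0_apply_basisVec (β : (Fin 7 → ℝ) [⋀^Fin 4]→ₗ[ℝ] ℝ) :
    wedgeRight β phi0 basisVec =
      6 * (β (basisVec ∘ ![3, 4, 5, 6]) + β (basisVec ∘ ![1, 2, 5, 6]) +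
        β (basisVec ∘ ![1, 2, 3, 4]) + β (basisVec ∘ ![0, 2, 4, 6]) -
        β (basisVec ∘ ![0, 2, 3, 5]) - β (basisVec ∘ ![0, 1, 4, 5]) -
        β (basisVec ∘ ![0, 1, 3, 6])) := by
  simp only [phi0, map_add, map_sub, AlternatingMap.add_apply, AlternatingMap.sub_apply]
  rw [wedgeRight_dx_apply_basisVec β 0 1 2 0 0 ![3, 4, 5, 6] rfl rfl (by decide),
    wedgeRight_dx_apply_basisVec β 0 3 4 2 2 ![1, 2, 5, 6] rfl rfl (by decide),
    wedgeRight_dx_apply_basisVec β 0 5 6 4 4 ![1, 2, 3, 4] rfl rfl (by decide),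
    wedgeRight_dx_apply_basisVec β 1 3 5 2 3 ![0, 2, 4, 6] rfl rfl (by decide),
    wedgeRight_dx_apply_basisVec β 1 4 6 3 4 ![0, 2, 3, 5] rfl rfl (by decide),
    wedgeRight_dx_apply_basisVec β 2 3 6 2 4 ![0, 1, 4, 5] rfl rfl (by decide),
    wedgeRight_dx_apply_basisVec β 2 4 5 3 3 ![0, 1, 3, 6] rfl rfl (by decide)]
  simp only [Fin.coe_ofNat_eq_mod, Nat.reduceMod, Nat.reduceAdd]
  ring

lemma bryantForm_phi0_apply_basisVec (u v : Fin 7 → ℝ) :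
    bryantForm phi0 u v basisVec = 72 * (u ⬝ᵥ v) := by
  have hcomp (a b c d : Fin 7) :
      basisVec ∘ ![a, b, c, d] = ![basisVec a, basisVec b, basisVec c, basisVec d] :=
    (FinVec.map_eq basisVec ![a, b, c, d]).symm
  rw [bryantForm, wedgeRight_phi0_apply_basisVec]
  simp only [hcomp, wedgeRight_two_two_apply, curryLeft_apply_apply]
  simp only [phi0, AlternatingMap.add_apply, AlternatingMap.sub_apply, dx_apply, basisVec,
    Pi.single_apply, Fin.reduceEq, reduceIte, dotProduct, Fin.sum_univ_seven]
  ring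

end PhiZero

/-- If a bijective linear map `g : ℝ⁷ → ℝ⁷` preserves `φ₀`, then `g` preserves the standard
Euclidean inner product and preserves orientation, i.e. `det g = 1`. -/
theorem statement0 (g : (Fin 7 → ℝ) →ₗ[ℝ] (Fin 7 → ℝ)) (hg : Function.Bijective g)
    (hpres : ∀ v₁ v₂ v₃ : Fin 7 → ℝ, phi0 ![g v₁, g v₂, g v₃] = phi0 ![v₁, v₂, v₃]) :
    (∀ v w : Fin 7 → ℝ, ∑ i, g v i * g w i = ∑ i, v i * w i) ∧ LinearMap.det g = 1 := by
  have hphi : phi0.compLinearMap g = phi0 := alternatingMap_ext_three fun u v w =>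
    (congrArg phi0 (FinVec.map_eq g ![u, v, w]).symm).trans (hpres u v w)
  have hscaled (v w : Fin 7 → ℝ) : LinearMap.det g * (g v ⬝ᵥ g w) = v ⬝ᵥ w := by
    have hpull := bryantForm_compLinearMap phi0 g v w
    rw [hphi, compLinearMap_eq_det_smul (Pi.basisFun ℝ (Fin 7))] at hpull
    have hvol := DFunLike.congr_fun hpull basisVec
    rw [AlternatingMap.smul_apply, bryantForm_phi0_apply_basisVec,
      bryantForm_phi0_apply_basisVec, smul_eq_mul] at hvol
    linarith
  have hdet : LinearMap.det g = 1 := det_eq_one_of_det_mul_dotProduct (by decide) hscaled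
  exact ⟨fun v w => (one_mul (g v ⬝ᵥ g w)).symm.trans (hdet ▸ hscaled v w), hdet⟩
end

section
/- The maps α, β, γ : T⁷ → T⁷ pairwise commute, each of α, β, γ has order exactly 2 in the group of bijections of T⁷, and the subgroup Γ of bijections of T⁷ generated by α, β, γ is isomorphic to (ℤ/2ℤ)³; in particular Γ has order 8. -/
/-- The 7-torus `T⁷ = (ℝ/ℤ)⁷`. -/
abbrev T7 : Type := Fin 7 → AddCircle (1 : ℝ)

/-- The element `½ ∈ ℝ/ℤ`. -/
noncomputable def half : AddCircle (1 : ℝ) := ((1 / 2 : ℝ) : AddCircle (1 : ℝ))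

/-- `α(x) = (x₁, x₂, x₃, −x₄, −x₅, −x₆, −x₇)` on `T⁷` (with 0-based indexing). -/
noncomputable def tα : T7 → T7 := fun x => ![x 0, x 1, x 2, -x 3, -x 4, -x 5, -x 6]

/-- `β(x) = (x₁, −x₂, −x₃, x₄, x₅, ½−x₆, −x₇)` on `T⁷` (with 0-based indexing). -/
noncomputable def tβ : T7 → T7 := fun x => ![x 0, -x 1, -x 2, x 3, x 4, half - x 5, -x 6]

/-- `γ(x) = (−x₁, x₂, −x₃, x₄, ½−x₅, x₆, ½−x₇)` on `T⁷` (with 0-based indexing). -/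
noncomputable def tγ : T7 → T7 := fun x => ![-x 0, x 1, -x 2, x 3, half - x 4, x 5, half - x 6]

lemma tα_invol : Function.Involutive tα := by
  intro x; funext i
  fin_cases i
  · rfl
  · rfl
  · rfl
  · exact neg_neg _
  · exact neg_neg _
  · exact neg_neg _
  · exact neg_neg _

lemma tβ_invol : Function.Involutive tβ := by
  intro x; funext i
  fin_cases i
  · rfl
  · exact neg_neg _
  · exact neg_neg _
  · rfl
  · rfl
  · exact sub_sub_cancel _ _
  · exact neg_neg _

lemma tγ_invol : Function.Involutive tγ := by
  intro x; funext i
  fin_cases i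
  · exact neg_neg _
  · rfl
  · exact neg_neg _
  · rfl
  · exact sub_sub_cancel _ _
  · rfl
  · exact sub_sub_cancel _ _

/-- `α` as a bijection (element of the group of bijections) of `T⁷`. -/
noncomputable def pα : Equiv.Perm T7 := Function.Involutive.toPerm tα tα_invol

/-- `β` as a bijection (element of the group of bijections) of `T⁷`. -/
noncomputable def pβ : Equiv.Perm T7 := Function.Involutive.toPerm tβ tβ_invol

/-- `γ` as a bijection (element of the group of bijections) of `T⁷`. -/
noncomputable def pγ : Equiv.Perm T7 := Function.Involutive.toPerm tγ tγ_invol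

/-!
Each of `α`, `β`, `γ` acts coordinatewise by `y ↦ y`, `y ↦ -y` or `y ↦ ½ - y`, and these maps of
`ℝ/ℤ` are commuting involutions because `2 · ½ = 0`. Independence is read off from single
coordinates: `α` inverts `x₄`, which `β` and `γ` fix, and `β` inverts `x₂`, which `γ` fixes. Since
negation on `ℝ/ℤ` is not the identity, `α ∉ ⟨β, γ⟩` and `β ∉ ⟨γ⟩`, so `⟨α, β, γ⟩` is the internal
direct product of three groups of order two.
-/

section InternalProducts

variable {G : Type*} [Group G]

/-- The internal direct product: two elementwise commuting subgroups with trivial intersection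
generate a copy of their product. -/
noncomputable def supMulEquivProd (H K : Subgroup G) (hcomm : ∀ h : H, ∀ k : K, Commute (h : G) k)
    (hdisj : Disjoint H K) : ↥(H ⊔ K) ≃* H × K :=
  have hinj : Function.Injective (H.subtype.noncommCoprod K.subtype hcomm) :=
    (MonoidHom.noncommCoprod_injective _ _ hcomm).mpr
      ⟨H.subtype_injective, K.subtype_injective, by simpa only [Subgroup.range_subtype] using hdisj⟩
  have hrange : (H.subtype.noncommCoprod K.subtype hcomm).range = H ⊔ K :=
    (MonoidHom.noncommCoprod_range _ _ hcomm).trans <| by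
      rw [Subgroup.range_subtype, Subgroup.range_subtype]
  ((MonoidHom.ofInjective hinj).trans (MulEquiv.subgroupCongr hrange)).symm

/-- The identification of a cyclic group `⟨a⟩` with `ℤ/nℤ`, where `n` is the order of `a`. The
value `n = 0`, for which `ZMod n` is `ℤ`, covers the elements of infinite order. -/
noncomputable def zpowersMulEquivZMod (a : G) {n : ℕ} (ha : orderOf a = n) :
    Subgroup.zpowers a ≃* Multiplicative (ZMod n) :=
  mulEquivOfCyclicCardEq <| by
    rw [Nat.card_zpowers, ha, Nat.card_congr Multiplicative.toAdd, Nat.card_zmod]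

lemma commute_of_mem_zpowers_of_mem_closure {a : G} {s : Set G} (hcomm : ∀ b ∈ s, Commute a b)
    {g h : G} (hg : g ∈ Subgroup.zpowers a) (hh : h ∈ Subgroup.closure s) : Commute g h := by
  have hle : Subgroup.closure s ≤ Subgroup.centralizer {a} :=
    (Subgroup.closure_le _).mpr fun b hb =>
      Subgroup.mem_centralizer_singleton_iff.mpr (hcomm b hb).symm
  obtain ⟨n, rfl⟩ := Subgroup.mem_zpowers_iff.mp hg
  exact (show Commute h a from Subgroup.mem_centralizer_singleton_iff.mp (hle hh)).symm.zpow_left n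

lemma zpowers_sup_closure (a : G) (s : Set G) :
    Subgroup.zpowers a ⊔ Subgroup.closure s = Subgroup.closure (insert a s) := by
  rw [Subgroup.zpowers_eq_closure, ← Subgroup.closure_union, Set.singleton_union]

/-- The splitting `⟨a, s⟩ ≃ ℤ/nℤ × ⟨s⟩` for an element `a` of order `n` that commutes with `s` and
whose powers meet `⟨s⟩` trivially. -/
noncomputable def closureInsertMulEquiv {a : G} {s : Set G} {n : ℕ} (ha : orderOf a = n)
    (hcomm : ∀ b ∈ s, Commute a b) (hdisj : Disjoint (Subgroup.zpowers a) (Subgroup.closure s)) :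
    Subgroup.closure (insert a s) ≃* Multiplicative (ZMod n) × Subgroup.closure s :=
  (MulEquiv.subgroupCongr (zpowers_sup_closure a s).symm).trans <|
    (supMulEquivProd _ _
      (fun g h => commute_of_mem_zpowers_of_mem_closure hcomm g.2 h.2) hdisj).trans <|
    (zpowersMulEquivZMod a ha).prodCongr (MulEquiv.refl _)

/-- The identification `⟨a, b, c⟩ ≃ ℤ/lℤ × ℤ/mℤ × ℤ/nℤ` for independent commuting elements
`a`, `b`, `c` of orders `l`, `m`, `n`. -/
noncomputable def closureTripleMulEquiv {a b c : G} {l m n : ℕ}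
    (ha : orderOf a = l) (hb : orderOf b = m) (hc : orderOf c = n)
    (hab : Commute a b) (hac : Commute a c) (hbc : Commute b c)
    (ha_disj : Disjoint (Subgroup.zpowers a) (Subgroup.closure {b, c}))
    (hb_disj : Disjoint (Subgroup.zpowers b) (Subgroup.closure {c})) :
    Subgroup.closure {a, b, c} ≃* Multiplicative (ZMod l × ZMod m × ZMod n) :=
  have hcomm : ∀ g ∈ ({b, c} : Set G), Commute a g := by simpa using ⟨hab, hac⟩
  have hcyclic : Subgroup.closure {c} = Subgroup.zpowers c := (Subgroup.zpowers_eq_closure c).symm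
  let e_c : Subgroup.closure {c} ≃* Multiplicative (ZMod n) :=
    (MulEquiv.subgroupCongr hcyclic).trans (zpowersMulEquivZMod c hc)
  let e_bc : Subgroup.closure {b, c} ≃* Multiplicative (ZMod m × ZMod n) :=
    (closureInsertMulEquiv hb (by simpa using hbc) hb_disj).trans <|
      ((MulEquiv.refl _).prodCongr e_c).trans (MulEquiv.prodMultiplicative _ _).symm
  (closureInsertMulEquiv ha hcomm ha_disj).trans <|
    ((MulEquiv.refl _).prodCongr e_bc).trans (MulEquiv.prodMultiplicative _ _).symm

lemma disjoint_zpowers_of_prime_orderOf {a : G} (ha : (orderOf a).Prime) {K : Subgroup G}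
    (haK : a ∉ K) : Disjoint (Subgroup.zpowers a) K := by
  have : Fact (Nat.card (Subgroup.zpowers a)).Prime := ⟨by rwa [Nat.card_zpowers]⟩
  refine (Subgroup.subgroupOf_eq_bot.mp <|
    (K.subgroupOf (Subgroup.zpowers a)).eq_bot_or_eq_top_of_prime_card.resolve_right ?_).symm
  rwa [Subgroup.subgroupOf_eq_top, Subgroup.zpowers_le]

end InternalProducts

lemma orderOf_toPerm_eq_two {X : Type*} {f : X → X} (hf : Function.Involutive f)
    (hne : hf.toPerm f ≠ 1) : orderOf (hf.toPerm f) = 2 :=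
  orderOf_eq_prime (Equiv.ext hf) hne

lemma apply_eq_of_mem_closure {X Y : Type*} {π : X → Y} {s : Set (Equiv.Perm X)}
    (hs : ∀ g ∈ s, ∀ x, π (g x) = π x) {f : Equiv.Perm X} (hf : f ∈ Subgroup.closure s) (x : X) :
    π (f x) = π x := by
  induction hf using Subgroup.closure_induction generalizing x with
  | mem g hg => exact hs g hg x
  | one => rfl
  | mul g h _ _ ihg ihh => exact (ihg (h x)).trans (ihh x)
  | inv g _ ih => simpa using (ih (g⁻¹ x)).symm

lemma notMem_closure_of_apply_eq_neg {ι A : Type*} [Neg A] (hA : ∃ y : A, -y ≠ y)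
    {f : Equiv.Perm (ι → A)} {s : Set (Equiv.Perm (ι → A))} (i : ι) (hf : ∀ x, f x i = -x i)
    (hs : ∀ g ∈ s, ∀ x, g x i = x i) : f ∉ Subgroup.closure s := by
  intro hmem
  obtain ⟨y, hy⟩ := hA
  exact hy <| (hf fun _ => y).symm.trans <| apply_eq_of_mem_closure (π := (· i)) hs hmem fun _ => y

lemma exists_neg_ne_self_addCircle {𝕜 : Type*} [Field 𝕜] [LinearOrder 𝕜] [IsStrictOrderedRing 𝕜]
    {p : 𝕜} [Fact (0 < p)] : ∃ y : AddCircle p, -y ≠ y := by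
  refine ⟨((p / (3 : ℕ) : 𝕜) : AddCircle p), fun h => ?_⟩
  have hdvd := addOrderOf_dvd_of_nsmul_eq_zero ((two_nsmul _).trans (neg_eq_iff_add_eq_zero.mp h))
  rw [AddCircle.addOrderOf_period_div three_pos] at hdvd
  omega

lemma neg_half : -half = half := by
  have hadd : half + half = 0 := by
    rw [half, ← AddCircle.coe_add, add_halves, AddCircle.coe_period]
  exact neg_eq_of_add_eq_zero_left hadd

lemma sub_half_eq_half_add (y : AddCircle (1 : ℝ)) : y - half = half + y := by
  rw [sub_eq_add_neg, neg_half, add_comm]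

lemma commute_pα_pβ : Commute pα pβ := by
  ext x i
  change tα (tβ x) i = tβ (tα x) i
  fin_cases i <;> simp [tα, tβ, sub_half_eq_half_add]

lemma commute_pα_pγ : Commute pα pγ := by
  ext x i
  change tα (tγ x) i = tγ (tα x) i
  fin_cases i <;> simp [tα, tγ, sub_half_eq_half_add]

lemma commute_pβ_pγ : Commute pβ pγ := by
  ext x i
  change tβ (tγ x) i = tγ (tβ x) i
  fin_cases i <;> simp [tβ, tγ, sub_half_eq_half_add]

lemma pα_notMem_closure : pα ∉ Subgroup.closure {pβ, pγ} :=
  notMem_closure_of_apply_eq_neg exists_neg_ne_self_addCircle 3 (fun _ => rfl)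
    (by rintro g (rfl | rfl) x <;> rfl)

lemma pβ_notMem_closure : pβ ∉ Subgroup.closure {pγ} :=
  notMem_closure_of_apply_eq_neg exists_neg_ne_self_addCircle 1 (fun _ => rfl)
    (by rintro g rfl x; rfl)

lemma pγ_notMem_closure_empty : pγ ∉ Subgroup.closure ∅ :=
  notMem_closure_of_apply_eq_neg exists_neg_ne_self_addCircle 0 (fun _ => rfl)
    (fun _ hg => hg.elim)

lemma orderOf_pα : orderOf pα = 2 :=
  orderOf_toPerm_eq_two tα_invol (ne_of_mem_of_not_mem (one_mem _) pα_notMem_closure).symm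

lemma orderOf_pβ : orderOf pβ = 2 :=
  orderOf_toPerm_eq_two tβ_invol (ne_of_mem_of_not_mem (one_mem _) pβ_notMem_closure).symm

lemma orderOf_pγ : orderOf pγ = 2 :=
  orderOf_toPerm_eq_two tγ_invol (ne_of_mem_of_not_mem (one_mem _) pγ_notMem_closure_empty).symm

/-- `α, β, γ` pairwise commute, each has order exactly `2` in the group of bijections of `T⁷`,
and the subgroup `Γ` of bijections of `T⁷` generated by `α, β, γ` is isomorphic to `(ℤ/2ℤ)³`;
in particular `Γ` has order `8`. -/
theorem statement5 :
    Commute pα pβ ∧ Commute pα pγ ∧ Commute pβ pγ ∧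
    orderOf pα = 2 ∧ orderOf pβ = 2 ∧ orderOf pγ = 2 ∧
    Nonempty ((Subgroup.closure {pα, pβ, pγ} : Subgroup (Equiv.Perm T7)) ≃*
      Multiplicative (ZMod 2 × ZMod 2 × ZMod 2)) ∧
    Nat.card (Subgroup.closure {pα, pβ, pγ} : Subgroup (Equiv.Perm T7)) = 8 := by
  have e : (Subgroup.closure {pα, pβ, pγ} : Subgroup (Equiv.Perm T7)) ≃*
      Multiplicative (ZMod 2 × ZMod 2 × ZMod 2) :=
    closureTripleMulEquiv orderOf_pα orderOf_pβ orderOf_pγ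
      commute_pα_pβ commute_pα_pγ commute_pβ_pγ
      (disjoint_zpowers_of_prime_orderOf (orderOf_pα ▸ Nat.prime_two) pα_notMem_closure)
      (disjoint_zpowers_of_prime_orderOf (orderOf_pβ ▸ Nat.prime_two) pβ_notMem_closure)
  refine ⟨commute_pα_pβ, commute_pα_pγ, commute_pβ_pγ, orderOf_pα, orderOf_pβ, orderOf_pγ, ⟨e⟩, ?_⟩
  simp [Nat.card_congr (e.toEquiv.trans Multiplicative.toAdd)]
end

section
/- A point x ∈ T⁷ is a fixed point of β if and only if 2x₂ = 0, 2x₃ = 0, 2x₆ = ½ and 2x₇ = 0 in ℝ/ℤ; consequently the fixed point set of β is a disjoint union of 16 three-dimensional subtori of T⁷. -/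
/-!
Only the coordinates `x₂, x₃, x₆, x₇` enter the fixed-point equations, which ask that each of them
have a prescribed double. Doubling on `ℝ/ℤ` is two-to-one and onto, so `2⁴ = 16` quadruples of these
coordinates are allowed, and the fixed point set is the disjoint union of the fibres of the
coordinate projection over them.
-/

lemma addCircle_nsmul_surjective {K : Type*} [DivisionRing K] [CharZero K] {p : K} {n : ℕ}
    (hn : n ≠ 0) : Function.Surjective fun θ : AddCircle p ↦ n • θ := by
  intro c
  obtain ⟨r, rfl⟩ := QuotientAddGroup.mk_surjective c
  refine ⟨((n : K)⁻¹ * r : K), ?_⟩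
  change ((n • ((n : K)⁻¹ * r) : K) : AddCircle p) = r
  rw [nsmul_eq_mul, mul_inv_cancel_left₀ (Nat.cast_ne_zero.mpr hn)]

lemma addCircle_setOf_nsmul_eq_nsmul {K : Type*} [DivisionRing K] [CharZero K] {p : K} {n : ℕ}
    (hn : n ≠ 0) (θ : AddCircle p) :
    {ψ : AddCircle p | n • ψ = n • θ} =
      (fun k : ℕ ↦ θ + k • ((p / n : K) : AddCircle p)) '' Set.Iio n := by
  ext ψ
  simp only [Set.mem_ofPred_eq, QuotientAddGroup.zmultiples_nsmul_eq_nsmul_iff hn, Fin.exists_iff,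
    Set.mem_image, Set.mem_Iio, exists_prop, eq_comm (a := ψ)]

lemma addCircle_encard_setOf_nsmul_eq {K : Type*} [Field K] [LinearOrder K]
    [IsStrictOrderedRing K] {p : K} [Fact (0 < p)] {n : ℕ} (hn : n ≠ 0) (c : AddCircle p) :
    {ψ : AddCircle p | n • ψ = c}.encard = n := by
  obtain ⟨θ, rfl⟩ := addCircle_nsmul_surjective hn c
  have translates_injOn :
      (Set.Iio n).InjOn fun k : ℕ ↦ θ + k • ((p / n : K) : AddCircle p) := by
    have multiples_injOn := nsmul_injOn_Iio_addOrderOf (x := ((p / n : K) : AddCircle p))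
    rw [AddCircle.addOrderOf_period_div (Nat.pos_of_ne_zero hn)] at multiples_injOn
    exact (add_right_injective θ).comp_injOn multiples_injOn
  rw [addCircle_setOf_nsmul_eq_nsmul hn, translates_injOn.encard_image]
  exact Set.Nat.encard_range n

lemma exists_fin_preimage_eq_iUnion_fibers {X Y : Type*} {f : X → Y} {s : Set Y}
    (hsf : s ⊆ Set.range f) {n : ℕ} (hs : s.encard = n) :
    ∃ F : Fin n → Set X, f ⁻¹' s = ⋃ i, F i ∧ Pairwise (fun i j ↦ Disjoint (F i) (F j)) ∧
      (∀ i, (F i).Nonempty) ∧ ∀ i, ∃ y, F i = f ⁻¹' {y} := by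
  have : Finite s := Set.finite_of_encard_eq_coe hs
  have card_s : Nat.card s = n := by
    rw [Nat.card_coe_set_eq, Set.ncard, hs, ENat.toNat_natCast]
  have e : Fin n ≃ s := (Finite.equivFinOfCardEq card_s).symm
  refine ⟨fun i ↦ f ⁻¹' {(e i : Y)}, ?_, ?_, ?_, fun i ↦ ⟨e i, rfl⟩⟩
  · rw [e.surjective.iUnion_comp fun y : s ↦ f ⁻¹' {(y : Y)},
      ← Set.biUnion_eq_iUnion s fun y _ ↦ f ⁻¹' {y}, Set.biUnion_preimage_singleton]
  · exact (pairwise_disjoint_fiber f).comp_of_injective (Subtype.val_injective.comp e.injective)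
  · exact fun i ↦ hsf (e i).2

lemma tβ_eq_self_iff (x : T7) : tβ x = x ↔
    x 1 + x 1 = 0 ∧ x 2 + x 2 = 0 ∧ x 5 + x 5 = half ∧ x 6 + x 6 = 0 := by
  simp [tβ, funext_iff, Fin.forall_fin_succ, neg_eq_iff_add_eq_zero, sub_eq_iff_eq_add,
    eq_comm (a := half)]

/-- The projection of `T⁷` onto the coordinates `x₂, x₃, x₆, x₇` on which `β` acts nontrivially;
its fibres are the three-dimensional coordinate subtori. -/
def reflectedCoords (x : T7) : UnitAddCircle × UnitAddCircle × UnitAddCircle × UnitAddCircle :=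
  (x 1, x 2, x 5, x 6)

lemma reflectedCoords_surjective : Function.Surjective reflectedCoords :=
  fun ⟨a, b, c, d⟩ ↦ ⟨![0, a, b, 0, 0, c, d], rfl⟩

/-- The values of `reflectedCoords` at the fixed points of `β`, as a product of fibres of the
doubling map of `ℝ/ℤ`. -/
def fixedReflectedCoords : Set (UnitAddCircle × UnitAddCircle × UnitAddCircle × UnitAddCircle) :=
  {a | 2 • a = 0} ×ˢ {b | 2 • b = 0} ×ˢ {c | 2 • c = half} ×ˢ {d | 2 • d = 0}

lemma encard_fixedReflectedCoords : fixedReflectedCoords.encard = (16 : ℕ) := by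
  simp only [fixedReflectedCoords, Set.encard_prod, addCircle_encard_setOf_nsmul_eq two_ne_zero]
  norm_num

lemma setOf_tβ_eq_self_eq_preimage :
    {x : T7 | tβ x = x} = reflectedCoords ⁻¹' fixedReflectedCoords := by
  ext x
  simp only [Set.mem_ofPred_eq, tβ_eq_self_iff, reflectedCoords, fixedReflectedCoords,
    Set.mem_preimage, Set.mem_prod, two_nsmul]

/-- `x` is a fixed point of `β` iff `2x₂ = 0, 2x₃ = 0, 2x₆ = ½, 2x₇ = 0` in `ℝ/ℤ`; consequently
the fixed point set of `β` is a disjoint union of 16 three-dimensional subtori of `T⁷`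
(coordinate slices in the coordinates `x₂, x₃, x₆, x₇`, i.e. 0-based indices 1,2,5,6). -/
theorem statement7 :
    (∀ x : T7, tβ x = x ↔
      (x 1 + x 1 = 0 ∧ x 2 + x 2 = 0 ∧ x 5 + x 5 = half ∧ x 6 + x 6 = 0)) ∧
    ∃ F : Fin 16 → Set T7,
      ({x : T7 | tβ x = x} = ⋃ i, F i) ∧
      (Pairwise fun i j => Disjoint (F i) (F j)) ∧
      (∀ i, (F i).Nonempty) ∧
      (∀ i, ∃ a b c d : AddCircle (1 : ℝ),
        F i = {x : T7 | x 1 = a ∧ x 2 = b ∧ x 5 = c ∧ x 6 = d}) := by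
  refine ⟨tβ_eq_self_iff, ?_⟩
  obtain ⟨F, fixed_eq_iUnion, disjoint, nonempty, eq_fiber⟩ :=
    exists_fin_preimage_eq_iUnion_fibers (fun y _ ↦ reflectedCoords_surjective y)
      encard_fixedReflectedCoords
  refine ⟨F, setOf_tβ_eq_self_eq_preimage.trans fixed_eq_iUnion, disjoint, nonempty, fun i ↦ ?_⟩
  obtain ⟨⟨a, b, c, d⟩, hF⟩ := eq_fiber i
  refine ⟨a, b, c, d, hF.trans ?_⟩
  ext x
  simp only [reflectedCoords, Set.mem_preimage, Set.mem_singleton_iff, Prod.mk.injEq,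
    Set.mem_ofPred_eq]
end

section
/- A point x ∈ T⁷ is a fixed point of γ if and only if 2x₁ = 0, 2x₃ = 0, 2x₅ = ½ and 2x₇ = ½ in ℝ/ℤ; consequently the fixed point set of γ is a disjoint union of 16 three-dimensional subtori of T⁷. -/
/-!
`γ` fixes `x₂, x₄, x₆` and replaces each other coordinate `u` by `c - u`, with `c = 0` for `x₁, x₃`
and `c = ½` for `x₅, x₇`; thus `γ x = x` says precisely that `2u = c` for each of those four.
Doubling on `ℝ/ℤ` is a surjective homomorphism whose kernel is cyclic of order two, so each of these
equations has two solutions. Hence the fixed point set is the preimage of a set of `2⁴ = 16` points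
under the projection of `T⁷` to the coordinates `(x₁, x₃, x₅, x₇)`, and the 16 fibres of that
projection are the three-dimensional subtori.
-/

section DivisionPoints

/-- The solutions of `n • a = c`: the `n`-division points of `c`, i.e. the fibre over `c` of
multiplication by `n`. -/
def divisionPoints {A : Type*} [AddMonoid A] (n : ℕ) (c : A) : Set A := {a | n • a = c}

theorem mem_divisionPoints_two {A : Type*} [AddMonoid A] {a c : A} :
    a ∈ divisionPoints 2 c ↔ a + a = c := by
  rw [divisionPoints, Set.mem_ofPred_eq, two_nsmul]

variable {𝕜 : Type*} [Field 𝕜] {p : 𝕜} {n : ℕ}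

theorem nsmul_addCircle_surjective [CharZero 𝕜] (hn : n ≠ 0) :
    Function.Surjective (nsmulAddMonoidHom (α := AddCircle p) n) := by
  intro c
  obtain ⟨r, rfl⟩ := QuotientAddGroup.mk_surjective c
  refine ⟨((r / n : 𝕜) : AddCircle p), ?_⟩
  rw [nsmulAddMonoidHom_apply, ← AddCircle.coe_nsmul, nsmul_eq_mul,
    mul_div_cancel₀ r (Nat.cast_ne_zero.2 hn)]

variable [LinearOrder 𝕜] [IsStrictOrderedRing 𝕜] [Fact (0 < p)]

theorem ker_nsmul_addCircle (hn : 0 < n) :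
    (nsmulAddMonoidHom n).ker = AddSubgroup.zmultiples ((p / n : 𝕜) : AddCircle p) := by
  apply le_antisymm
  · intro u hu
    obtain ⟨m, -, rfl⟩ := (AddCircle.nsmul_eq_zero_iff hn).1 hu
    rw [AddCircle.natCast_div_mul_eq_nsmul]
    exact AddSubgroup.nsmul_mem_zmultiples _ m
  · rw [AddSubgroup.zmultiples_le, AddMonoidHom.mem_ker, nsmulAddMonoidHom_apply]
    exact addOrderOf_dvd_iff_nsmul_eq_zero.1 (AddCircle.addOrderOf_period_div hn).dvd

theorem ncard_divisionPoints_addCircle (hn : 0 < n) (c : AddCircle p) :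
    (divisionPoints n c).ncard = n :=
  calc (divisionPoints n c).ncard
    _ = Nat.card (nsmulAddMonoidHom (α := AddCircle p) n).ker :=
        Nat.card_congr
          (AddMonoidHom.fiberEquivKerOfSurjective (nsmul_addCircle_surjective hn.ne') c)
    _ = n := by
        rw [ker_nsmul_addCircle hn, Nat.card_zmultiples, AddCircle.addOrderOf_period_div hn]

end DivisionPoints

theorem exists_injective_fin_range_eq {β : Type*} {S : Set β} {n : ℕ} (hn : n ≠ 0)
    (hS : S.ncard = n) : ∃ b : Fin n → β, Function.Injective b ∧ Set.range b = S := by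
  have : Finite S := Set.finite_of_ncard_ne_zero (hS ▸ hn)
  let e := Finite.equivFinOfCardEq hS
  refine ⟨Subtype.val ∘ e.symm, Subtype.val_injective.comp e.symm.injective, ?_⟩
  rw [e.symm.surjective.range_comp, Subtype.range_coe]

/-- The projection `x ↦ (x₁, x₃, x₅, x₇)` of `T⁷` to the coordinates that `γ` reverses
(0-based indices 0, 2, 4, 6). -/
def reversedCoords (x : T7) :
    AddCircle (1 : ℝ) × AddCircle (1 : ℝ) × AddCircle (1 : ℝ) × AddCircle (1 : ℝ) :=
  (x 0, x 2, x 4, x 6)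

theorem reversedCoords_surjective : Function.Surjective reversedCoords :=
  fun ⟨a, b, c, d⟩ => ⟨![a, 0, b, 0, c, 0, d], rfl⟩

theorem tγ_eq_self_iff (x : T7) : tγ x = x ↔
    x 0 + x 0 = 0 ∧ x 2 + x 2 = 0 ∧ x 4 + x 4 = half ∧ x 6 + x 6 = half :=
  calc tγ x = x
    _ ↔ -x 0 = x 0 ∧ -x 2 = x 2 ∧ half - x 4 = x 4 ∧ half - x 6 = x 6 := by
        simp [tγ, funext_iff, Fin.forall_fin_succ]
    _ ↔ x 0 + x 0 = 0 ∧ x 2 + x 2 = 0 ∧ x 4 + x 4 = half ∧ x 6 + x 6 = half := by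
        simp only [neg_eq_iff_add_eq_zero, sub_eq_iff_eq_add, eq_comm (a := half)]

/-- The possible values of `(x₁, x₃, x₅, x₇)` at a fixed point of `γ`. -/
def fixedValues :
    Set (AddCircle (1 : ℝ) × AddCircle (1 : ℝ) × AddCircle (1 : ℝ) × AddCircle (1 : ℝ)) :=
  divisionPoints 2 0 ×ˢ divisionPoints 2 0 ×ˢ divisionPoints 2 half ×ˢ divisionPoints 2 half

theorem setOf_tγ_eq_self : {x | tγ x = x} = reversedCoords ⁻¹' fixedValues := by
  ext x
  simp only [fixedValues, reversedCoords, Set.mem_preimage, Set.mem_prod, mem_divisionPoints_two,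
    Set.mem_ofPred_eq, tγ_eq_self_iff]

theorem ncard_fixedValues : fixedValues.ncard = 16 := by
  simp only [fixedValues, Set.ncard_prod, ncard_divisionPoints_addCircle two_pos, Nat.reduceMul]

/-- `x` is a fixed point of `γ` iff `2x₁ = 0, 2x₃ = 0, 2x₅ = ½, 2x₇ = ½` in `ℝ/ℤ`; consequently
the fixed point set of `γ` is a disjoint union of 16 three-dimensional subtori of `T⁷`
(coordinate slices in the coordinates `x₁, x₃, x₅, x₇`, i.e. 0-based indices 0,2,4,6). -/
theorem statement8 :
    (∀ x : T7, tγ x = x ↔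
      (x 0 + x 0 = 0 ∧ x 2 + x 2 = 0 ∧ x 4 + x 4 = half ∧ x 6 + x 6 = half)) ∧
    ∃ F : Fin 16 → Set T7,
      ({x : T7 | tγ x = x} = ⋃ i, F i) ∧
      (Pairwise fun i j => Disjoint (F i) (F j)) ∧
      (∀ i, (F i).Nonempty) ∧
      (∀ i, ∃ a b c d : AddCircle (1 : ℝ),
        F i = {x : T7 | x 0 = a ∧ x 2 = b ∧ x 4 = c ∧ x 6 = d}) := by
  refine ⟨tγ_eq_self_iff, ?_⟩
  obtain ⟨v, v_injective, range_v⟩ :=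
    exists_injective_fin_range_eq (by norm_num) ncard_fixedValues
  refine ⟨fun i => reversedCoords ⁻¹' {v i}, ?_, ?_, ?_, ?_⟩
  · rw [setOf_tγ_eq_self, ← range_v, ← Set.iUnion_singleton_eq_range, Set.preimage_iUnion]
  · exact fun i j hij => (Set.disjoint_singleton.2 (v_injective.ne hij)).preimage reversedCoords
  · exact fun i => (Set.singleton_nonempty (v i)).preimage reversedCoords_surjective
  · intro i
    rcases hv : v i with ⟨a, b, c, d⟩
    refine ⟨a, b, c, d, ?_⟩
    simp only [hv, reversedCoords, Set.preimage, Set.mem_singleton_iff, Prod.mk.injEq]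
end

section
/- Each of the four composite maps α∘β, α∘γ, β∘γ and α∘β∘γ : T⁷ → T⁷ has no fixed points. Hence the only elements of the group Γ generated by α, β, γ having fixed points on T⁷ are the identity, α, β and γ. -/
section CommutingInvolutions

variable {G : Type*} [Group G] {a b c g : G} {S : Set G}

lemma zpow_eq_one_or_self_of_mul_self_eq_one (ha : a * a = 1) (n : ℤ) : a ^ n = 1 ∨ a ^ n = a := by
  have ha_two : a ^ (2 : ℤ) = 1 := (zpow_two a).trans ha
  rcases n.even_or_odd' with ⟨k, rfl | rfl⟩
  · left
    rw [zpow_mul, ha_two, one_zpow]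
  · right
    rw [zpow_add_one, zpow_mul, ha_two, one_zpow, one_mul]

lemma mem_closure_insert_iff_exists_zpow_mul
    (ha : a ∈ Subgroup.normalizer (Subgroup.closure S : Set G)) :
    g ∈ Subgroup.closure (insert a S) ↔ ∃ n : ℤ, ∃ h ∈ Subgroup.closure S, a ^ n * h = g := by
  rw [Set.insert_eq, Subgroup.closure_union, ← Subgroup.zpowers_eq_closure, ← SetLike.mem_coe,
    Subgroup.coe_mul_of_left_le_normalizer_right _ _ (Subgroup.zpowers_le.mpr ha)]
  simp only [Set.mem_mul, SetLike.mem_coe, Subgroup.exists_mem_zpowers]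

lemma mem_normalizer_closure_of_forall_commute (hS : ∀ s ∈ S, Commute a s) :
    a ∈ Subgroup.normalizer (Subgroup.closure S : Set G) := by
  refine Subgroup.centralizer_le_normalizer _ ?_
  rw [Subgroup.centralizer_closure]
  exact Subgroup.mem_centralizer_iff.mpr fun s hs => (hS s hs).symm

lemma mem_closure_insert_iff_of_mul_self_eq_one (ha : a * a = 1)
    (ha_normalizer : a ∈ Subgroup.normalizer (Subgroup.closure S : Set G)) :
    g ∈ Subgroup.closure (insert a S) ↔
      g ∈ Subgroup.closure S ∨ ∃ h ∈ Subgroup.closure S, g = a * h := by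
  rw [mem_closure_insert_iff_exists_zpow_mul ha_normalizer]
  constructor
  · rintro ⟨n, h, hh, rfl⟩
    rcases zpow_eq_one_or_self_of_mul_self_eq_one ha n with hn | hn
    · exact .inl (by rwa [hn, one_mul])
    · exact .inr ⟨h, hh, by rw [hn]⟩
  · rintro (hg | ⟨h, hh, rfl⟩)
    · exact ⟨0, g, hg, by rw [zpow_zero, one_mul]⟩
    · exact ⟨1, h, hh, by rw [zpow_one]⟩

lemma mem_closure_triple_iff_of_mul_self_eq_one (ha : a * a = 1) (hb : b * b = 1) (hc : c * c = 1)
    (hab : Commute a b) (hac : Commute a c) (hbc : Commute b c) :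
    g ∈ Subgroup.closure {a, b, c} ↔
      g = 1 ∨ g = a ∨ g = b ∨ g = c ∨
        g = a * b ∨ g = a * c ∨ g = b * c ∨ g = a * (b * c) := by
  have ha_normalizer : a ∈ Subgroup.normalizer (Subgroup.closure {b, c} : Set G) :=
    mem_normalizer_closure_of_forall_commute (by simpa using ⟨hab, hac⟩)
  have hb_normalizer : b ∈ Subgroup.normalizer (Subgroup.closure {c} : Set G) :=
    mem_normalizer_closure_of_forall_commute (by simpa using hbc)
  have hc_normalizer : c ∈ Subgroup.normalizer (Subgroup.closure (∅ : Set G) : Set G) :=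
    mem_normalizer_closure_of_forall_commute (by simp)
  have mem_c (h : G) : h ∈ Subgroup.closure {c} ↔ h = 1 ∨ h = c := by
    simpa using mem_closure_insert_iff_of_mul_self_eq_one (g := h) hc hc_normalizer
  have mem_bc (h : G) : h ∈ Subgroup.closure {b, c} ↔ h = 1 ∨ h = c ∨ h = b ∨ h = b * c := by
    simp [mem_closure_insert_iff_of_mul_self_eq_one hb hb_normalizer, mem_c, or_assoc]
  rw [mem_closure_insert_iff_of_mul_self_eq_one ha ha_normalizer]
  simp only [mem_bc, or_and_right, exists_or, exists_eq_left, mul_one]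
  tauto

end CommutingInvolutions

lemma addOrderOf_half : addOrderOf half = 2 :=
  mod_cast AddCircle.addOrderOf_period_div (p := (1 : ℝ)) two_pos

lemma half_ne_zero : half ≠ 0 :=
  (addOrderOf_eq_prime_iff.mp addOrderOf_half).2

lemma half_add_half : half + half = 0 := by
  rw [← two_nsmul, ← addOrderOf_half, addOrderOf_nsmul_eq_zero]

lemma neg_sub_ne_self_of_ne_zero {A : Type*} [AddGroup A] {a : A} (ha : a ≠ 0) (y : A) :
    -(a - y) ≠ y := by
  rwa [neg_sub, ne_eq, sub_eq_self]

lemma tα_tβ_ne_self (x : T7) : tα (tβ x) ≠ x :=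
  fun h => neg_sub_ne_self_of_ne_zero half_ne_zero (x 5) (congrFun h 5)

lemma tα_tγ_ne_self (x : T7) : tα (tγ x) ≠ x :=
  fun h => neg_sub_ne_self_of_ne_zero half_ne_zero (x 4) (congrFun h 4)

lemma tβ_tγ_ne_self (x : T7) : tβ (tγ x) ≠ x :=
  fun h => neg_sub_ne_self_of_ne_zero half_ne_zero (x 6) (congrFun h 6)

lemma tα_tβ_tγ_ne_self (x : T7) : tα (tβ (tγ x)) ≠ x :=
  fun h => neg_sub_ne_self_of_ne_zero half_ne_zero (x 4) (congrFun h 4)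

lemma neg_half_sub (y : AddCircle (1 : ℝ)) : -(half - y) = half - -y := by
  rw [neg_sub', neg_half]

lemma pα_mul_self : pα * pα = 1 :=
  Equiv.ext tα_invol

lemma pβ_mul_self : pβ * pβ = 1 :=
  Equiv.ext tβ_invol

lemma pγ_mul_self : pγ * pγ = 1 :=
  Equiv.ext tγ_invol

lemma mem_closure_pα_pβ_pγ_iff {g : Equiv.Perm T7} :
    g ∈ Subgroup.closure {pα, pβ, pγ} ↔
      g = 1 ∨ g = pα ∨ g = pβ ∨ g = pγ ∨
        g = pα * pβ ∨ g = pα * pγ ∨ g = pβ * pγ ∨ g = pα * (pβ * pγ) :=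
  mem_closure_triple_iff_of_mul_self_eq_one pα_mul_self pβ_mul_self pγ_mul_self
    commute_pα_pβ commute_pα_pγ commute_pβ_pγ

/-- Each of `α∘β`, `α∘γ`, `β∘γ`, `α∘β∘γ` has no fixed points on `T⁷`; hence the only elements
of the group `Γ` generated by `α, β, γ` having fixed points are the identity, `α`, `β` and `γ`. -/
theorem statement9 :
    (∀ x : T7, tα (tβ x) ≠ x) ∧ (∀ x : T7, tα (tγ x) ≠ x) ∧
    (∀ x : T7, tβ (tγ x) ≠ x) ∧ (∀ x : T7, tα (tβ (tγ x)) ≠ x) ∧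
    (∀ g ∈ (Subgroup.closure {pα, pβ, pγ} : Subgroup (Equiv.Perm T7)),
      (∃ x : T7, g x = x) → g = 1 ∨ g = pα ∨ g = pβ ∨ g = pγ) := by
  refine ⟨tα_tβ_ne_self, tα_tγ_ne_self, tβ_tγ_ne_self, tα_tβ_tγ_ne_self, ?_⟩
  rintro g hg ⟨x, hx⟩
  rcases mem_closure_pα_pβ_pγ_iff.mp hg with h | h | h | h | rfl | rfl | rfl | rfl
  · exact .inl h
  · exact .inr (.inl h)
  · exact .inr (.inr (.inl h))
  · exact .inr (.inr (.inr h))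
  · exact (tα_tβ_ne_self x hx).elim
  · exact (tα_tγ_ne_self x hx).elim
  · exact (tβ_tγ_ne_self x hx).elim
  · exact (tα_tβ_tγ_ne_self x hx).elim
end

section
/- Let A_α = diag(1,1,1,−1,−1,−1,−1), A_β = diag(1,−1,−1,1,1,−1,−1) and A_γ = diag(−1,1,−1,1,−1,1,−1) act on alternating 3-forms on ℝ⁷ by pullback. Then the subspace of alternating 3-forms on ℝ⁷ fixed by all three of A_α, A_β, A_γ has dimension exactly 7; it is spanned by dx^{123}, dx^{145}, dx^{167}, dx^{246}, dx^{257}, dx^{347}, dx^{356}. -/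
/-- The diagonal linear map on `ℝ⁷` with diagonal entries `d`. -/
noncomputable def Adiag (d : Fin 7 → ℝ) : (Fin 7 → ℝ) →ₗ[ℝ] (Fin 7 → ℝ) :=
  LinearMap.pi fun i => d i • LinearMap.proj i

/-!
Pullback along a diagonal map multiplies each elementary form by the product of the corresponding
diagonal entries. The invariant forms are therefore spanned by the elementary forms for which all
three of these products are `1`. Reading the three signs at coordinate `i` as a nonzero vector of
`𝔽₂³`, the products over a triple of distinct coordinates are all `1` exactly when the three vectors
sum to zero, that is, when the triple is a line of the Fano plane; there are seven lines.
-/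

open Module

section ElementaryForms

variable {R ι κ : Type*} [CommRing R]

/-- The elementary form `v ↦ det (v a (I b))`, i.e. the wedge product of the coordinate forms
`dx^{I b}`. The multi-index `I` need not be increasing or injective; in particular
`dx i j k` is `elementaryForm ![i, j, k]`. -/
noncomputable def elementaryForm [Fintype κ] [DecidableEq κ] (I : κ → ι) :
    (ι → R) [⋀^κ]→ₗ[R] R :=
  (Matrix.detRowAlternating : (κ → R) [⋀^κ]→ₗ[R] R).compLinearMap (LinearMap.funLeft R R I)

theorem compLinearMap_mulLeft_apply_single [Fintype κ] [DecidableEq ι] {N : Type*}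
    [AddCommGroup N] [Module R N] (φ : (ι → R) [⋀^κ]→ₗ[R] N) (d : ι → R) (I : κ → ι) :
    φ.compLinearMap (LinearMap.mulLeft R d) (fun a => Pi.single (I a) 1) =
      (∏ a, d (I a)) • φ (fun a => Pi.single (I a) 1) := by
  have mul_single (i : ι) : d * Pi.single i 1 = d i • Pi.single i (1 : R) := by
    ext j
    obtain rfl | h := eq_or_ne j i <;> simp [*]
  simp only [AlternatingMap.compLinearMap_apply, LinearMap.mulLeft_apply, mul_single,
    AlternatingMap.map_smul_univ]

variable [LinearOrder ι] [Finite ι] {n : ℕ}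

variable (R ι n) in
/-- The basis of the alternating `n`-forms on `ι → R` consisting of the elementary forms with
increasing multi-index (see `elementaryBasis_apply`), constructed as the dual of the standard basis
of the `n`-th exterior power of `ι → R`. -/
noncomputable def elementaryBasis : Basis (Fin n ↪o ι) R ((ι → R) [⋀^Fin n]→ₗ[R] R) :=
  ((((Pi.basisFun R ι).exteriorPower n).dualBasis).map
    exteriorPower.alternatingMapLinearEquiv.symm).reindex Set.powersetCard.ofFinEmbEquiv.symm

theorem elementaryBasis_apply (I : Fin n ↪o ι) : elementaryBasis R ι n I = elementaryForm I := by
  ext v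
  simp only [elementaryBasis, Basis.reindex_apply, Equiv.symm_symm, Basis.map_apply,
    exteriorPower.alternatingMapLinearEquiv_symm_apply, LinearMap.compAlternatingMap_apply,
    Basis.coe_dualBasis, exteriorPower.basis_coord, exteriorPower.ιMultiDual_apply_ιMulti,
    Equiv.symm_apply_apply]
  rfl

theorem elementaryBasis_repr_apply (φ : (ι → R) [⋀^Fin n]→ₗ[R] R) (I : Fin n ↪o ι) :
    (elementaryBasis R ι n).repr φ I = φ (fun a => Pi.single (I a) 1) := by
  simp only [elementaryBasis, Basis.repr_reindex_apply, Equiv.symm_symm, Basis.map_repr,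
    LinearEquiv.symm_symm, LinearEquiv.trans_apply, Basis.dualBasis_repr,
    exteriorPower.basis_apply, exteriorPower.ιMulti_family,
    exteriorPower.alternatingMapLinearEquiv_apply_ιMulti, Equiv.symm_apply_apply]
  simp [Function.comp_def]

theorem compLinearMap_mulLeft_eq_self_iff [NoZeroDivisors R] (φ : (ι → R) [⋀^Fin n]→ₗ[R] R)
    (d : ι → R) :
    φ.compLinearMap (LinearMap.mulLeft R d) = φ ↔
      ∀ I ∈ ((elementaryBasis R ι n).repr φ).support, ∏ a, d (I a) = 1 := by
  simp only [(elementaryBasis R ι n).ext_elem_iff, Finsupp.mem_support_iff,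
    elementaryBasis_repr_apply, compLinearMap_mulLeft_apply_single, smul_eq_mul,
    mul_left_eq_self₀, or_iff_not_imp_right, ne_eq]

theorem forall_compLinearMap_mulLeft_eq_self_iff [NoZeroDivisors R] {σ : Type*} (d : σ → ι → R)
    (φ : (ι → R) [⋀^Fin n]→ₗ[R] R) :
    (∀ s, φ.compLinearMap (LinearMap.mulLeft R (d s)) = φ) ↔
      φ ∈ Submodule.span R (elementaryBasis R ι n '' {I | ∀ s, ∏ a, d s (I a) = 1}) := by
  simp only [compLinearMap_mulLeft_eq_self_iff, Basis.mem_span_image, Set.subset_def,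
    Finset.mem_coe, Set.mem_ofPred_eq]
  exact forall_comm.trans (forall_congr' fun _ => forall_comm)

end ElementaryForms

section FanoPlane

/-- The diagonal entries of `A_α`, `A_β`, `A_γ`. The signs in column `i` are the binary digits of
`i + 1`, with `-1` standing for the digit `1` and `A_α` for the leading digit. -/
def involutionSign : Fin 3 → Fin 7 → ℤˣ :=
  ![![1, 1, 1, -1, -1, -1, -1], ![1, -1, -1, 1, 1, -1, -1], ![-1, 1, -1, 1, -1, 1, -1]]

/-- The seven lines of the Fano plane, each listed as an increasing triple of points `0, …, 6`. -/
def fanoLine (l : Fin 7) : Fin 3 ↪o Fin 7 :=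
  OrderEmbedding.ofStrictMono
    (![![0, 1, 2], ![0, 3, 4], ![0, 5, 6], ![1, 3, 5], ![1, 4, 6], ![2, 3, 6], ![2, 4, 5]] l)
    (by revert l; decide)

theorem fanoLine_injective : Function.Injective fanoLine := by
  decide

theorem prod_involutionSign_fanoLine (s : Fin 3) (l : Fin 7) :
    ∏ a, involutionSign s (fanoLine l a) = 1 := by
  revert s l
  decide

theorem exists_fanoLine_of_prod_involutionSign_eq_one {i j k : Fin 7} (hij : i < j) (hjk : j < k)
    (h : ∀ s, involutionSign s i * involutionSign s j * involutionSign s k = 1) :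
    ∃ l, fanoLine l 0 = i ∧ fanoLine l 1 = j ∧ fanoLine l 2 = k := by
  revert i j k
  decide

theorem setOf_prod_involutionSign_eq_one :
    {I : Fin 3 ↪o Fin 7 | ∀ s, ∏ a, involutionSign s (I a) = 1} = Set.range fanoLine := by
  refine Set.Subset.antisymm (fun I hI => ?_) ?_
  · simp only [Set.mem_ofPred_eq, Fin.prod_univ_three] at hI
    obtain ⟨l, h0, h1, h2⟩ := exists_fanoLine_of_prod_involutionSign_eq_one
      (I.strictMono (by decide : (0 : Fin 3) < 1)) (I.strictMono (by decide : (1 : Fin 3) < 2)) hI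
    refine ⟨l, DFunLike.ext _ _ fun a => ?_⟩
    fin_cases a
    exacts [h0, h1, h2]
  · rintro _ ⟨l, rfl⟩ s
    exact prod_involutionSign_fanoLine s l

end FanoPlane

section InvariantForms

variable {R : Type*} [CommRing R]

theorem prod_intCast_units_eq_one_iff {κ : Type*} [Fintype κ] (h : (-1 : R) ≠ 1) (u : κ → ℤˣ) :
    ∏ a, ((u a : ℤ) : R) = 1 ↔ ∏ a, u a = 1 := by
  rw [← Int.cast_prod, ← Units.coe_prod]
  obtain hu | hu := Int.units_eq_one_or (∏ a, u a) <;> simp [hu, h]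

theorem range_elementaryForm_fanoLine :
    Set.range (fun l => (elementaryForm (fanoLine l) : (Fin 7 → R) [⋀^Fin 3]→ₗ[R] R)) =
      {elementaryForm ![0, 1, 2], elementaryForm ![0, 3, 4], elementaryForm ![0, 5, 6],
        elementaryForm ![1, 3, 5], elementaryForm ![1, 4, 6], elementaryForm ![2, 3, 6],
        elementaryForm ![2, 4, 5]} := by
  ext φ
  simp [fanoLine, Fin.exists_fin_succ, eq_comm]

theorem linearIndependent_elementaryForm_fanoLine :
    LinearIndependent R
      (fun l => (elementaryForm (fanoLine l) : (Fin 7 → R) [⋀^Fin 3]→ₗ[R] R)) := by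
  simpa only [Function.comp_def, elementaryBasis_apply] using
    (elementaryBasis R (Fin 7) 3).linearIndependent.comp fanoLine fanoLine_injective

theorem forall_compLinearMap_involutionSign_eq_self_iff [NoZeroDivisors R] (h : (-1 : R) ≠ 1)
    (φ : (Fin 7 → R) [⋀^Fin 3]→ₗ[R] R) :
    (∀ s, φ.compLinearMap (LinearMap.mulLeft R fun i => ((involutionSign s i : ℤ) : R)) = φ) ↔
      φ ∈ Submodule.span R (Set.range fun l => elementaryForm (fanoLine l)) := by
  simp only [forall_compLinearMap_mulLeft_eq_self_iff
      (fun s i => ((involutionSign s i : ℤ) : R)), prod_intCast_units_eq_one_iff h,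
    setOf_prod_involutionSign_eq_one, ← Set.range_comp, Function.comp_def, elementaryBasis_apply]

theorem statement13_general [NoZeroDivisors R] (h : (-1 : R) ≠ 1) :
    {φ : (Fin 7 → R) [⋀^Fin 3]→ₗ[R] R |
        φ.compLinearMap (LinearMap.mulLeft R ![1, 1, 1, -1, -1, -1, -1]) = φ ∧
        φ.compLinearMap (LinearMap.mulLeft R ![1, -1, -1, 1, 1, -1, -1]) = φ ∧
        φ.compLinearMap (LinearMap.mulLeft R ![-1, 1, -1, 1, -1, 1, -1]) = φ}
      = ↑(Submodule.span R
          ({elementaryForm ![0, 1, 2], elementaryForm ![0, 3, 4], elementaryForm ![0, 5, 6],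
            elementaryForm ![1, 3, 5], elementaryForm ![1, 4, 6], elementaryForm ![2, 3, 6],
            elementaryForm ![2, 4, 5]} : Set ((Fin 7 → R) [⋀^Fin 3]→ₗ[R] R))) ∧
    finrank R
      (Submodule.span R
        ({elementaryForm ![0, 1, 2], elementaryForm ![0, 3, 4], elementaryForm ![0, 5, 6],
          elementaryForm ![1, 3, 5], elementaryForm ![1, 4, 6], elementaryForm ![2, 3, 6],
          elementaryForm ![2, 4, 5]} : Set ((Fin 7 → R) [⋀^Fin 3]→ₗ[R] R))) = 7 := by
  have : Nontrivial R := nontrivial_of_ne _ _ h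
  have cast_involutionSign : (fun s i => ((involutionSign s i : ℤ) : R)) =
      ![![1, 1, 1, -1, -1, -1, -1], ![1, -1, -1, 1, 1, -1, -1], ![-1, 1, -1, 1, -1, 1, -1]] := by
    ext s i
    fin_cases s <;> fin_cases i <;> simp [involutionSign]
  rw [← range_elementaryForm_fanoLine]
  constructor
  · ext φ
    rw [SetLike.mem_coe, ← forall_compLinearMap_involutionSign_eq_self_iff h]
    simp only [congrFun cast_involutionSign]
    simp [Fin.forall_fin_succ]
  · rw [finrank_span_eq_card linearIndependent_elementaryForm_fanoLine, Fintype.card_fin]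

end InvariantForms

/-- The subspace of alternating 3-forms on `ℝ⁷` fixed under pullback by the three diagonal maps
`A_α, A_β, A_γ` is exactly the span of
`dx^{123}, dx^{145}, dx^{167}, dx^{246}, dx^{257}, dx^{347}, dx^{356}`, and it has
dimension exactly `7`. -/
theorem statement13 :
    {φ : AlternatingMap ℝ (Fin 7 → ℝ) ℝ (Fin 3) |
        φ.compLinearMap (Adiag ![1, 1, 1, -1, -1, -1, -1]) = φ ∧
        φ.compLinearMap (Adiag ![1, -1, -1, 1, 1, -1, -1]) = φ ∧
        φ.compLinearMap (Adiag ![-1, 1, -1, 1, -1, 1, -1]) = φ}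
      = ↑(Submodule.span ℝ
          ({dx 0 1 2, dx 0 3 4, dx 0 5 6, dx 1 3 5, dx 1 4 6, dx 2 3 6, dx 2 4 5} :
            Set (AlternatingMap ℝ (Fin 7 → ℝ) ℝ (Fin 3)))) ∧
    Module.finrank ℝ
      (Submodule.span ℝ
        ({dx 0 1 2, dx 0 3 4, dx 0 5 6, dx 1 3 5, dx 1 4 6, dx 2 3 6, dx 2 4 5} :
          Set (AlternatingMap ℝ (Fin 7 → ℝ) ℝ (Fin 3)))) = 7 :=
  -- `dx i j k` and `Adiag d` unfold to `elementaryForm ![i, j, k]` and `LinearMap.mulLeft ℝ d`.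
  statement13_general (by norm_num)
end
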